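/- Let d ≥ 1 and p ≥ 2 be integers. Let u be a real polynomial in d variables of degree at most p in each variable, and let v be the unique real polynomial in d variables of degree at most p−1 in each variable that agrees with u at every point of the grid {x_1, …, x_p}^d of Gauss–Lobatto nodes. Then ∫_{[−1,1]^d} |∇v(x)|² dx ≤ (2 + 4/(2p−3))^{d−1} ∫_{[−1,1]^d} |∇u(x)|² dx, where |∇w|² denotes the sum of the squares of the d partial derivatives of w. -/

import Mathlib

open Polynomial

/-- The `n`-th Legendre polynomial, given by the Rodrigues formula
`P_n(x) = 1/(2^n n!) dⁿ/dxⁿ (x² − 1)ⁿ`, normalized so that `P_n(1) = 1`. -/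
noncomputable def legendre (n : ℕ) : Polynomial ℝ :=
  Polynomial.C (1 / (2 ^ n * (n.factorial : ℝ))) *
    (⇑(Polynomial.derivative (R := ℝ)))^[n] ((Polynomial.X ^ 2 - 1) ^ n)

/-- The polynomial `χ_p(x) = P_{p−1}'(x) (x² − 1)`, whose roots are the `p`
Gauss–Lobatto nodes. -/
noncomputable def lobattoChi (p : ℕ) : Polynomial ℝ :=
  Polynomial.derivative (legendre (p - 1)) * (Polynomial.X ^ 2 - 1)

open MeasureTheory

/-!
Interpolation in the variable `X j` replaces `u = w + χ_p(X j) q`, with `q` free of `X j`, by `w`,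
and the tensor product interpolant is obtained by doing this once for each variable. Slicing along
the `j`-th coordinate reduces the effect of one such step on each partial derivative to a comparison
of `f` with `f + c χ_p` in one variable, where `deg f ≤ p - 1`.

* Differentiating along the step, `χ_p'` is a multiple of `P_{p-1}`, hence orthogonal to `f'`,
  so the `L²` norm of the derivative does not increase.
* Differentiating in another variable, the `L²` norms of `f` and `f + c χ_p` themselves have to be
  compared. As `χ_p` is a multiple of `P_p - P_{p-2}` and `P_p` is orthogonal to `f`, the squared
  norm grows by at most the factor `1 + ‖P_{p-2}‖² / ‖P_p‖² = 2 + 4 / (2p - 3)`.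

Each partial derivative thus loses the factor only in the `d - 1` steps of the other variables.
-/

section Rodrigues

/-- The derivative `dᵏ/dxᵏ (x² − 1)ⁿ`. Up to a scalar, `k = n` gives the Legendre polynomial `P_n`
and `k = n - 1` gives `χ_{n+1}`. -/
noncomputable def rodrigues (n k : ℕ) : ℝ[X] :=
  derivative^[k] ((X ^ 2 - 1) ^ n)

lemma derivative_rodrigues (n k : ℕ) : derivative (rodrigues n k) = rodrigues n (k + 1) :=
  (Function.iterate_succ_apply' _ _ _).symm

lemma legendre_eq_smul_rodrigues (n : ℕ) :
    legendre n = (1 / (2 ^ n * n.factorial : ℝ)) • rodrigues n n :=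
  (smul_eq_C_mul _).symm

lemma rodrigues_eval_eq_zero {n k : ℕ} (hk : k < n) {x : ℝ} (hx : x ^ 2 = 1) :
    (rodrigues n k).eval x = 0 := by
  have hdvd : (X ^ 2 - 1 : ℝ[X]) ∣ rodrigues n k :=
    (dvd_pow_self _ (Nat.sub_ne_zero_of_lt hk)).trans (pow_sub_dvd_iterate_derivative_pow _ n k)
  exact eval_eq_zero_of_dvd_of_eval_eq_zero hdvd (by simp [hx])

lemma natDegree_rodrigues_le (n k : ℕ) : (rodrigues n k).natDegree ≤ 2 * n - k := by
  refine (natDegree_iterate_derivative _ _).trans (Nat.sub_le_sub_right ?_ k)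
  compute_degree
  omega

lemma rodrigues_self_eval {x : ℝ} (hx : x ^ 2 = 1) (n : ℕ) :
    (rodrigues n n).eval x = 2 ^ n * n.factorial * x ^ n := by
  have hfactor : ((X ^ 2 - 1 : ℝ[X]) ^ n).map (algebraMap ℝ ℝ) =
      (X - C x) ^ n * (X + C x) ^ n := by
    rw [← mul_pow, mul_comm, ← sq_sub_sq, ← C_pow, hx]
    simp
  have h := aeval_iterate_derivative_self _ n x hfactor
  simp only [coe_aeval_eq_eval, eval_pow, eval_add, eval_X, eval_C, nsmul_eq_mul] at h
  rw [rodrigues, h]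
  ring

lemma derivative_X_sq_sub_one_pow_succ (n : ℕ) :
    derivative ((X ^ 2 - 1 : ℝ[X]) ^ (n + 1)) = (2 * (n + 1) : ℝ) • (X * (X ^ 2 - 1) ^ n) := by
  rw [derivative_pow_succ, derivative_sub, derivative_one, derivative_X_sq]
  simp only [smul_eq_C_mul, map_mul, map_add, map_natCast, map_one, C_ofNat]
  ring

lemma iterate_derivative_two_X_sq_sub_one_pow (n : ℕ) :
    derivative^[2] ((X ^ 2 - 1 : ℝ[X]) ^ (n + 2)) =
      (2 * (n + 2) * (2 * n + 3) : ℝ) • (X ^ 2 - 1) ^ (n + 1) +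
        (4 * (n + 2) * (n + 1) : ℝ) • (X ^ 2 - 1) ^ n := by
  rw [Function.iterate_succ_apply, Function.iterate_one, derivative_X_sq_sub_one_pow_succ,
    derivative_smul, derivative_mul, derivative_X, derivative_X_sq_sub_one_pow_succ]
  simp only [smul_eq_C_mul, map_mul, map_add, map_natCast, map_one, C_ofNat, Nat.cast_add,
    Nat.cast_one]
  ring

lemma rodrigues_add_two (n k : ℕ) :
    rodrigues (n + 2) (k + 2) =
      (2 * (n + 2) * (2 * n + 3) : ℝ) • rodrigues (n + 1) k +
        (4 * (n + 2) * (n + 1) : ℝ) • rodrigues n k := by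
  rw [rodrigues, Function.iterate_add_apply, iterate_derivative_two_X_sq_sub_one_pow,
    iterate_map_add, iterate_derivative_smul, iterate_derivative_smul]
  rfl

lemma X_sq_sub_one_pow_ode (n : ℕ) :
    derivative^[2] ((X ^ 2 - 1 : ℝ[X]) ^ (n + 1)) * X ^ 2 -
        derivative^[2] ((X ^ 2 - 1) ^ (n + 1)) =
      (2 * n) • (derivative ((X ^ 2 - 1) ^ (n + 1)) * X) +
        (2 * (n + 1)) • (X ^ 2 - 1) ^ (n + 1) := by
  rcases n with _ | n
  · have hsecond : derivative^[2] ((X ^ 2 - 1 : ℝ[X]) ^ (0 + 1)) = 2 := by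
      simp [one_add_one_eq_two, C_ofNat]
    rw [hsecond, mul_zero, zero_nsmul, nsmul_eq_mul]
    push_cast
    ring
  · rw [iterate_derivative_two_X_sq_sub_one_pow, derivative_X_sq_sub_one_pow_succ]
    simp only [smul_eq_C_mul, nsmul_eq_mul, map_mul, map_add, map_natCast, map_one, C_ofNat,
      Nat.cast_mul, Nat.cast_add, Nat.cast_one, Nat.cast_ofNat]
    ring

lemma X_sq_sub_one_mul_rodrigues (n : ℕ) :
    (X ^ 2 - 1) * rodrigues (n + 1) (n + 2) =
      ((n + 1) * (n + 2) : ℝ) • rodrigues (n + 1) n := by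
  have h := congrArg derivative^[n] (X_sq_sub_one_pow_ode n)
  simp only [iterate_derivative_sub, iterate_map_add, iterate_map_nsmul,
    iterate_derivative_derivative_mul_X_sq, iterate_derivative_derivative_mul_X,
    ← Function.iterate_add_apply] at h
  have hcast : ((n * (n - 1) : ℕ) : ℝ[X]) = n * (n - 1) := by cases n <;> simp
  simp only [nsmul_eq_mul, hcast, Nat.cast_mul, Nat.cast_add, Nat.cast_one, Nat.cast_ofNat] at h
  simp only [rodrigues, smul_eq_C_mul, map_mul, map_add, map_natCast, map_one, C_ofNat]
  linear_combination h

lemma lobattoChi_eq_smul_rodrigues (n : ℕ) :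
    lobattoChi (n + 2) =
      ((n + 1) * (n + 2) / (2 ^ (n + 1) * (n + 1).factorial) : ℝ) • rodrigues (n + 1) n := by
  rw [lobattoChi, Nat.add_succ_sub_one, legendre_eq_smul_rodrigues, derivative_smul,
    derivative_rodrigues, smul_mul_assoc, mul_comm (rodrigues _ _), X_sq_sub_one_mul_rodrigues,
    smul_smul]
  ring_nf

lemma legendre_add_two_sub_legendre (n : ℕ) :
    legendre (n + 2) - legendre n =
      ((2 * n + 3) / (2 ^ (n + 1) * (n + 1).factorial) : ℝ) • rodrigues (n + 1) n := by
  simp only [legendre_eq_smul_rodrigues, rodrigues_add_two, Nat.factorial_succ]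
  match_scalars <;> field_simp <;> ring

lemma lobattoChi_eq_smul_legendre_sub (n : ℕ) :
    lobattoChi (n + 2) =
      ((n + 1) * (n + 2) / (2 * n + 3) : ℝ) • (legendre (n + 2) - legendre n) := by
  rw [lobattoChi_eq_smul_rodrigues, legendre_add_two_sub_legendre, smul_smul]
  congr 1
  field_simp

lemma derivative_lobattoChi (n : ℕ) :
    derivative (lobattoChi (n + 2)) = ((n + 1) * (n + 2) : ℝ) • legendre (n + 1) := by
  rw [lobattoChi_eq_smul_rodrigues, derivative_smul, derivative_rodrigues,
    legendre_eq_smul_rodrigues, smul_smul, mul_one_div]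

lemma legendre_eval {x : ℝ} (hx : x ^ 2 = 1) (n : ℕ) : (legendre n).eval x = x ^ n := by
  rw [legendre_eq_smul_rodrigues, eval_smul, rodrigues_self_eval hx, smul_eq_mul]
  field_simp

lemma natDegree_legendre_le (n : ℕ) : (legendre n).natDegree ≤ n := by
  rw [legendre_eq_smul_rodrigues]
  have := natDegree_rodrigues_le n n
  exact (natDegree_smul_le _ _).trans (by omega)

lemma rodrigues_ne_zero {n k : ℕ} (hk : k ≤ n) : rodrigues n k ≠ 0 := by
  intro hzero
  have hself : rodrigues n n = derivative^[n - k] (rodrigues n k) := by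
    rw [rodrigues, rodrigues, ← Function.iterate_add_apply, Nat.sub_add_cancel hk]
  rw [hzero, iterate_derivative_zero] at hself
  simpa [hself, Nat.factorial_ne_zero] using rodrigues_self_eval (one_pow 2) n

lemma pair_subset_roots_rodrigues {n k : ℕ} (hk : k < n) :
    {1, -1} ⊆ (rodrigues n k).roots.toFinset := by
  intro x hx
  have hx : x ^ 2 = 1 := by rcases (by simpa using hx : x = 1 ∨ x = -1) with rfl | rfl <;> norm_num
  simpa [rodrigues_ne_zero hk.le] using rodrigues_eval_eq_zero hk hx

/-- By Rolle, differentiation produces a new root between any two consecutive roots, while the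
endpoints `±1` stay roots. -/
lemma add_two_le_card_roots_rodrigues {n k : ℕ} (hk : k < n) :
    k + 2 ≤ (rodrigues n k).roots.toFinset.card := by
  have hpair : ({1, -1} : Finset ℝ).card = 2 := Finset.card_pair (by norm_num)
  induction k with
  | zero => simpa [hpair] using Finset.card_le_card (pair_subset_roots_rodrigues hk)
  | succ k ih =>
    have hk' : k < n := by omega
    have hrolle :=
      card_roots_toFinset_le_card_roots_derivative_sdiff_roots_succ (rodrigues n k)
    rw [derivative_rodrigues] at hrolle
    have hends := Finset.card_le_card (Finset.subset_inter (pair_subset_roots_rodrigues hk)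
      (pair_subset_roots_rodrigues hk'))
    have hsplit := Finset.card_sdiff_add_card_inter (rodrigues n (k + 1)).roots.toFinset
      (rodrigues n k).roots.toFinset
    have := ih hk'
    omega

lemma le_card_roots_lobattoChi {p : ℕ} (hp : 2 ≤ p) :
    p ≤ (lobattoChi p).roots.toFinset.card := by
  obtain ⟨n, rfl⟩ := Nat.exists_eq_add_of_le' hp
  rw [lobattoChi_eq_smul_rodrigues, roots_smul_nonzero _ (by positivity)]
  exact add_two_le_card_roots_rodrigues n.lt_succ_self

lemma natDegree_lobattoChi {p : ℕ} (hp : 2 ≤ p) : (lobattoChi p).natDegree = p := by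
  refine le_antisymm ?_ <| (le_card_roots_lobattoChi hp).trans <|
    (Multiset.toFinset_card_le _).trans (card_roots' _)
  obtain ⟨n, rfl⟩ := Nat.exists_eq_add_of_le' hp
  rw [lobattoChi_eq_smul_rodrigues]
  have := natDegree_rodrigues_le (n + 1) n
  exact (natDegree_smul_le _ _).trans (by omega)

end Rodrigues

section SemidefiniteForm

variable {M : Type*} [AddCommGroup M] [Module ℝ M] {B : LinearMap.BilinForm ℝ M}

lemma apply_self_le_apply_add_smul_of_apply_eq_zero (hB : B.IsSymm) {f g : M}
    (hg : 0 ≤ B g g) (hgf : B g f = 0) (e : ℝ) : B f f ≤ B (f + e • g) (f + e • g) := by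
  have hfg : B f g = 0 := by rw [hB.eq, hgf]
  have hexp : B (f + e • g) (f + e • g) = B f f + e ^ 2 * B g g := by
    simp only [map_add, map_smul, LinearMap.add_apply, LinearMap.smul_apply, smul_eq_mul, hgf, hfg]
    ring
  rw [hexp]
  exact le_add_of_nonneg_right (mul_nonneg (sq_nonneg e) hg)

lemma apply_self_mul_le_of_apply_eq_zero (hB : B.IsSymm) (hpos : ∀ x, 0 ≤ B x x)
    {f a b : M} (hbf : B b f = 0) (hba : B b a = 0) (e : ℝ) :
    B b b * B f f ≤ (B a a + B b b) * B (f + e • (b - a)) (f + e • (b - a)) := by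
  have hfb : B f b = 0 := by rw [hB.eq, hbf]
  have hab : B a b = 0 := by rw [hB.eq, hba]
  have hcs := B.apply_sq_le_of_symm hpos ⟨hB.eq⟩ (f - e • a) a
  have hdiff : (B a a + B b b) * B (f + e • (b - a)) (f + e • (b - a)) - B b b * B f f =
      (B (f - e • a) (f - e • a) * B a a - B (f - e • a) a ^ 2) +
        (B (f - e • a) a - e * B b b) ^ 2 := by
    simp only [map_add, map_sub, map_smul, LinearMap.add_apply, LinearMap.sub_apply,
      LinearMap.smul_apply, smul_eq_mul, hbf, hba, hfb, hab, hB.eq a f]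
    ring
  rw [← sub_nonneg, hdiff]
  exact add_nonneg (sub_nonneg.2 hcs) (sq_nonneg _)

end SemidefiniteForm

section IntervalInner

/-- The `L²(-1, 1)` inner product of real polynomials, as a bilinear form. -/
noncomputable def intervalInner : LinearMap.BilinForm ℝ ℝ[X] :=
  LinearMap.mk₂ ℝ (fun f g => ∫ t in (-1 : ℝ)..1, f.eval t * g.eval t)
    (fun f₁ f₂ g => by
      simp only [eval_add, add_mul]
      exact intervalIntegral.integral_add
        ((f₁.continuous.mul g.continuous).intervalIntegrable _ _)
        ((f₂.continuous.mul g.continuous).intervalIntegrable _ _))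
    (fun c f g => by simp [mul_assoc])
    (fun f g₁ g₂ => by
      simp only [eval_add, mul_add]
      exact intervalIntegral.integral_add
        ((f.continuous.mul g₁.continuous).intervalIntegrable _ _)
        ((f.continuous.mul g₂.continuous).intervalIntegrable _ _))
    (fun c f g => by simp [mul_left_comm])

lemma intervalInner_apply (f g : ℝ[X]) :
    intervalInner f g = ∫ t in (-1 : ℝ)..1, f.eval t * g.eval t := rfl

lemma intervalInner_isSymm : intervalInner.IsSymm :=
  ⟨fun f g => by simp only [intervalInner_apply, mul_comm]⟩

lemma intervalInner_self_nonneg (f : ℝ[X]) : 0 ≤ intervalInner f f :=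
  intervalIntegral.integral_nonneg (by norm_num) fun _ _ => mul_self_nonneg _

lemma intervalInner_mul_left (f g h : ℝ[X]) :
    intervalInner (f * g) h = intervalInner g (f * h) := by
  simp only [intervalInner_apply, eval_mul, mul_left_comm, mul_assoc]

lemma intervalInner_derivative_add (f g : ℝ[X]) :
    intervalInner (derivative f) g + intervalInner f (derivative g) =
      f.eval 1 * g.eval 1 - f.eval (-1) * g.eval (-1) := by
  refine (intervalIntegral.integral_add
    ((f.derivative.continuous.mul g.continuous).intervalIntegrable _ _)
    ((f.continuous.mul g.derivative.continuous).intervalIntegrable _ _)).symm.trans ?_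
  exact intervalIntegral.integral_deriv_mul_eq_sub
    (fun x _ => f.hasDerivAt x) (fun x _ => g.hasDerivAt x)
    (f.derivative.continuous.intervalIntegrable _ _)
    (g.derivative.continuous.intervalIntegrable _ _)

lemma intervalInner_rodrigues_eq_zero {n k : ℕ} (hk : k ≤ n) {g : ℝ[X]}
    (hg : derivative^[k] g = 0) : intervalInner (rodrigues n k) g = 0 := by
  induction k generalizing g with
  | zero => simp_all
  | succ k ih =>
    have hparts := intervalInner_derivative_add (rodrigues n k) g
    rw [rodrigues_eval_eq_zero hk (one_pow 2), rodrigues_eval_eq_zero hk (by norm_num),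
      derivative_rodrigues, ih (by omega) hg] at hparts
    simpa using hparts

lemma intervalInner_legendre_eq_zero {n : ℕ} {g : ℝ[X]} (hg : derivative^[n] g = 0) :
    intervalInner (legendre n) g = 0 := by
  rw [legendre_eq_smul_rodrigues, map_smul, LinearMap.smul_apply,
    intervalInner_rodrigues_eq_zero le_rfl hg, smul_zero]

lemma iterate_derivative_X_mul_derivative_sub_smul {n : ℕ} {f : ℝ[X]} (hf : f.natDegree ≤ n) :
    derivative^[n] (X * derivative f - (n : ℝ) • f) = 0 := by
  have hsucc : derivative^[n + 1] f = 0 := iterate_derivative_eq_zero (by omega)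
  rw [iterate_derivative_sub, mul_comm, iterate_derivative_derivative_mul_X, hsucc,
    iterate_derivative_smul, Nat.cast_smul_eq_nsmul]
  simp

lemma intervalInner_legendre_self (n : ℕ) :
    intervalInner (legendre n) (legendre n) = 2 / (2 * n + 1) := by
  have hparts := intervalInner_derivative_add (X * legendre n) (legendre n)
  have horth := intervalInner_legendre_eq_zero
    (iterate_derivative_X_mul_derivative_sub_smul (natDegree_legendre_le n))
  have hends : (1 : ℝ) ^ n * 1 ^ n - -1 * (-1) ^ n * (-1) ^ n = 2 := by
    simp only [mul_assoc, ← mul_pow]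
    norm_num
  simp only [derivative_mul, derivative_X, one_mul, map_add, LinearMap.add_apply, eval_mul, eval_X,
    legendre_eval (one_pow 2), legendre_eval neg_one_sq, intervalInner_mul_left X (legendre n),
    intervalInner_isSymm.eq (X * derivative _), hends] at hparts
  rw [map_sub, map_smul, smul_eq_mul] at horth
  rw [eq_div_iff (by positivity)]
  linear_combination hparts - 2 * horth

end IntervalInner

section LobattoStability

/-- The constant `2 + 4 / (2p - 3) = 1 + ‖P_{p-2}‖² / ‖P_p‖²`, by which interpolation at the
Gauss–Lobatto nodes increases the squared `L²` norm of a polynomial of degree `p` at most. -/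
noncomputable def lobattoConst (p : ℕ) : ℝ :=
  2 + 4 / (2 * (p : ℝ) - 3)

lemma lobattoConst_nonneg {p : ℕ} (hp : 2 ≤ p) : 0 ≤ lobattoConst p := by
  have : (2 : ℝ) ≤ p := mod_cast hp
  have : 0 < 2 * (p : ℝ) - 3 := by linarith
  unfold lobattoConst
  positivity

lemma intervalInner_self_le_lobattoConst_mul {p : ℕ} (hp : 2 ≤ p) {f : ℝ[X]}
    (hf : f.natDegree ≤ p - 1) (c : ℝ) :
    intervalInner f f ≤
      lobattoConst p * intervalInner (f + c • lobattoChi p) (f + c • lobattoChi p) := by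
  obtain ⟨n, rfl⟩ := Nat.exists_eq_add_of_le' hp
  have horth_f : intervalInner (legendre (n + 2)) f = 0 :=
    intervalInner_legendre_eq_zero (iterate_derivative_eq_zero (by omega))
  have horth : intervalInner (legendre (n + 2)) (legendre n) = 0 :=
    intervalInner_legendre_eq_zero
      (iterate_derivative_eq_zero ((natDegree_legendre_le n).trans_lt (by omega)))
  have hstab := apply_self_mul_le_of_apply_eq_zero intervalInner_isSymm intervalInner_self_nonneg
    horth_f horth (c * ((n + 1) * (n + 2) / (2 * n + 3)))
  rw [mul_smul, ← lobattoChi_eq_smul_legendre_sub, intervalInner_legendre_self,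
    intervalInner_legendre_self] at hstab
  have hconst : 2 / (2 * n + 1) + 2 / (2 * (n + 2 : ℕ) + 1 : ℝ) =
      2 / (2 * (n + 2 : ℕ) + 1 : ℝ) * lobattoConst (n + 2) := by
    have : 2 * ((n : ℝ) + 2) - 3 = 2 * n + 1 := by ring
    rw [lobattoConst]
    push_cast
    rw [this]
    field_simp
    ring
  rw [hconst, mul_assoc] at hstab
  exact le_of_mul_le_mul_left hstab (by positivity)

lemma intervalInner_derivative_self_le {p : ℕ} (hp : 2 ≤ p) {f : ℝ[X]}
    (hf : f.natDegree ≤ p - 1) (c : ℝ) :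
    intervalInner (derivative f) (derivative f) ≤
      intervalInner (derivative (f + c • lobattoChi p)) (derivative (f + c • lobattoChi p)) := by
  obtain ⟨n, rfl⟩ := Nat.exists_eq_add_of_le' hp
  have horth : intervalInner (legendre (n + 1)) (derivative f) = 0 :=
    intervalInner_legendre_eq_zero (iterate_derivative_eq_zero (x := n + 2) (by omega))
  rw [derivative_add, derivative_smul, derivative_lobattoChi, smul_smul]
  exact apply_self_le_apply_add_smul_of_apply_eq_zero intervalInner_isSymm
    (intervalInner_self_nonneg _) horth _

end LobattoStability

section Slice

variable {σ R : Type*} [DecidableEq σ] [CommSemiring R]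

/-- The restriction of a polynomial in several variables to the line through `x` in the `j`-th
coordinate direction: `X j` is kept as the variable and every other `X i` is replaced by `x i`. -/
noncomputable def slice (x : σ → R) (j : σ) : MvPolynomial σ R →ₐ[R] R[X] :=
  MvPolynomial.aeval (Function.update (fun i => C (x i)) j X)

lemma eval_slice (x : σ → R) (j : σ) (f : MvPolynomial σ R) (t : R) :
    (slice x j f).eval t = MvPolynomial.eval (Function.update x j t) f := by
  rw [slice, ← coe_aeval_eq_eval, MvPolynomial.comp_aeval_apply, ← MvPolynomial.aeval_eq_eval]
  congr 2 with i
  rcases eq_or_ne i j with rfl | hij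
  · simp
  · simp [hij]

lemma natDegree_slice_le (x : σ → R) (j : σ) (f : MvPolynomial σ R) :
    (slice x j f).natDegree ≤ f.degreeOf j := by
  rw [slice, MvPolynomial.aeval_def, MvPolynomial.eval₂_eq]
  refine natDegree_sum_le_of_forall_le _ _ fun m hm => ?_
  have hfactor (i : σ) : (Function.update (fun i => C (x i)) j X i ^ m i).natDegree ≤
      if i = j then m j else 0 := by
    rcases eq_or_ne i j with rfl | hij
    · simpa using natDegree_X_pow_le _
    · rw [Function.update_of_ne hij, if_neg hij, ← C_pow, natDegree_C]
  calc _ ≤ ∑ i ∈ m.support, if i = j then m j else 0 :=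
        (natDegree_C_mul_le _ _).trans <|
          (natDegree_prod_le _ _).trans (Finset.sum_le_sum fun i _ => hfactor i)
    _ ≤ m j := by rw [Finset.sum_ite_eq']; split_ifs <;> simp
    _ ≤ f.degreeOf j := MvPolynomial.le_degreeOf_of_mem_support j hm

lemma slice_aeval_X (x : σ → R) (j : σ) (χ : R[X]) :
    slice x j (aeval (MvPolynomial.X j) χ) = χ := by
  rw [← aeval_algHom_apply]
  simp [slice]

lemma derivative_slice (x : σ → R) (j : σ) (f : MvPolynomial σ R) :
    derivative (slice x j f) = slice x j (MvPolynomial.pderiv j f) := by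
  induction f using MvPolynomial.induction_on with
  | C a => simp [slice]
  | add f g hf hg => simp only [map_add, hf, hg]
  | mul_X f i hf =>
    have hX : derivative (slice x j (MvPolynomial.X i)) =
        slice x j (MvPolynomial.pderiv j (MvPolynomial.X i)) := by
      rcases eq_or_ne i j with rfl | hij
      · simp [slice]
      · simp [slice, hij, MvPolynomial.pderiv_X_of_ne hij]
    simp only [map_mul, derivative_mul, MvPolynomial.pderiv_mul, map_add, hf, hX]

lemma exists_slice_add_aeval_X_mul_eq (x : σ → R) {j : σ} {q : MvPolynomial σ R}
    (hq : q.degreeOf j = 0) (χ : R[X]) (w : MvPolynomial σ R) :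
    ∃ c : R, slice x j (w + aeval (MvPolynomial.X j) χ * q) = slice x j w + c • χ := by
  have hconst := eq_C_of_natDegree_le_zero ((natDegree_slice_le x j q).trans hq.le)
  refine ⟨(slice x j q).coeff 0, ?_⟩
  rw [map_add, map_mul, slice_aeval_X, hconst, coeff_C_zero, smul_eq_C_mul, mul_comm]

end Slice

section DegreeOf

variable {σ R : Type*} [CommSemiring R]

lemma degreeOf_pderiv_le (i j : σ) (f : MvPolynomial σ R) :
    (MvPolynomial.pderiv i f).degreeOf j ≤ f.degreeOf j := by
  rw [MvPolynomial.degreeOf_le_iff]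
  intro m hm
  rw [MvPolynomial.mem_support_iff, MvPolynomial.coeff_pderiv] at hm
  have hle := MvPolynomial.le_degreeOf_of_mem_support j
    (MvPolynomial.mem_support_iff.2 (left_ne_zero_of_mul hm))
  exact le_self_add.trans hle

lemma degreeOf_monomial_le (m : σ →₀ ℕ) (a : R) (i : σ) :
    (MvPolynomial.monomial m a).degreeOf i ≤ m i := by
  rcases eq_or_ne a 0 with rfl | ha
  · simp
  · rw [MvPolynomial.degreeOf_monomial_eq _ _ ha]

lemma degreeOf_aeval_X_le (i j : σ) (f : R[X]) :
    (aeval (MvPolynomial.X j : MvPolynomial σ R) f).degreeOf i ≤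
      Finsupp.single j f.natDegree i := by
  rw [aeval_eq_sum_range]
  refine (MvPolynomial.degreeOf_sum_le _ _ _).trans (Finset.sup_le fun k hk => ?_)
  rw [MvPolynomial.smul_eq_C_mul, MvPolynomial.X_pow_eq_monomial]
  exact (MvPolynomial.degreeOf_C_mul_le _ _ _).trans <| (degreeOf_monomial_le _ _ _).trans <|
    Finsupp.single_mono (Finset.mem_range_succ_iff.1 hk) i

lemma X_pow_mul_monomial_erase (j : σ) (m : σ →₀ ℕ) (a : R) :
    MvPolynomial.X j ^ m j * MvPolynomial.monomial (m.erase j) a = MvPolynomial.monomial m a := by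
  rw [MvPolynomial.X_pow_eq_monomial, MvPolynomial.monomial_mul, one_mul, Finsupp.single_add_erase]

lemma degreeOf_aeval_X_mul_monomial_erase_le (i j : σ) (f : R[X]) (m : σ →₀ ℕ) (a : R) :
    (aeval (MvPolynomial.X j) f * MvPolynomial.monomial (m.erase j) a).degreeOf i ≤
      m.update j f.natDegree i := by
  rw [Finsupp.update_eq_single_add_erase]
  exact (MvPolynomial.degreeOf_mul_le _ _ _).trans
    (add_le_add (degreeOf_aeval_X_le i j f) (degreeOf_monomial_le _ a i))

end DegreeOf

section Division

variable {K : Type*} [Field K]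

lemma natDegree_div_le_sub (f : K[X]) {χ : K[X]} (hχ : χ ≠ 0) :
    (f / χ).natDegree ≤ f.natDegree - χ.natDegree := by
  rw [div_def]
  refine (natDegree_C_mul_le _ _).trans ?_
  rw [natDegree_divByMonic _ (monic_mul_leadingCoeff_inv hχ),
    natDegree_mul_leadingCoeff_inv _ hχ]

lemma exists_eq_add_aeval_X_mul {σ : Type*} {χ : K[X]} (hχ : χ.natDegree ≠ 0) (j : σ)
    (u : MvPolynomial σ K) :
    ∃ q w : MvPolynomial σ K, u = w + aeval (MvPolynomial.X j) χ * q ∧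
      q.degreeOf j ≤ u.degreeOf j - χ.natDegree ∧ w.degreeOf j < χ.natDegree ∧
      ∀ i ≠ j, w.degreeOf i ≤ u.degreeOf i := by
  classical
  have hχ0 : χ ≠ 0 := ne_zero_of_natDegree_gt (Nat.pos_of_ne_zero hχ)
  refine ⟨∑ m ∈ u.support, aeval (MvPolynomial.X j) (X ^ m j / χ) *
      MvPolynomial.monomial (m.erase j) (u.coeff m),
    ∑ m ∈ u.support, aeval (MvPolynomial.X j) (X ^ m j % χ) *
      MvPolynomial.monomial (m.erase j) (u.coeff m), ?_, ?_, ?_, fun i hij => ?_⟩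
  · conv_lhs => rw [← MvPolynomial.support_sum_monomial_coeff u]
    rw [Finset.mul_sum, ← Finset.sum_add_distrib]
    refine Finset.sum_congr rfl fun m _ => ?_
    rw [← mul_assoc, ← add_mul, ← map_mul, ← map_add, EuclideanDomain.mod_add_div, map_pow,
      aeval_X, X_pow_mul_monomial_erase]
  · refine (MvPolynomial.degreeOf_sum_le _ _ _).trans (Finset.sup_le fun m hm => ?_)
    refine (degreeOf_aeval_X_mul_monomial_erase_le _ _ _ _ _).trans ?_
    rw [Finsupp.coe_update, Function.update_self]
    refine (natDegree_div_le_sub _ hχ0).trans ?_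
    rw [natDegree_X_pow]
    exact Nat.sub_le_sub_right (MvPolynomial.le_degreeOf_of_mem_support j hm) _
  · refine (MvPolynomial.degreeOf_sum_le _ _ _).trans_lt <|
      (Finset.sup_lt_iff (Nat.pos_of_ne_zero hχ)).2 fun m _ => ?_
    refine (degreeOf_aeval_X_mul_monomial_erase_le _ _ _ _ _).trans_lt ?_
    rw [Finsupp.coe_update, Function.update_self]
    exact natDegree_mod_lt _ hχ
  · refine (MvPolynomial.degreeOf_sum_le _ _ _).trans (Finset.sup_le fun m hm => ?_)
    refine (degreeOf_aeval_X_mul_monomial_erase_le _ _ _ _ _).trans ?_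
    rw [Finsupp.coe_update, Function.update_of_ne hij]
    exact MvPolynomial.le_degreeOf_of_mem_support i hm

end Division

section CubeNorm

variable {σ : Type*}

lemma continuous_eval_sq (f : MvPolynomial σ ℝ) :
    Continuous fun x => (MvPolynomial.eval x f) ^ 2 :=
  (MvPolynomial.continuous_eval f).pow 2

lemma setIntegral_eval_update_sq [DecidableEq σ] (x : σ → ℝ) (j : σ) (f : MvPolynomial σ ℝ) :
    ∫ t in Set.Icc (-1 : ℝ) 1, (MvPolynomial.eval (Function.update x j t) f) ^ 2 =
      intervalInner (slice x j f) (slice x j f) := by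
  simp only [← eval_slice, sq]
  rw [integral_Icc_eq_integral_Ioc, ← intervalIntegral.integral_of_le (by norm_num),
    intervalInner_apply]

variable [Fintype σ]

lemma setIntegral_pi_le_of_forall_update [DecidableEq σ] {s : σ → Set ℝ}
    (hs : ∀ i, IsCompact (s i)) {f g : (σ → ℝ) → ℝ} (hf : Continuous f) (hg : Continuous g)
    (hf0 : 0 ≤ f) (hg0 : 0 ≤ g) (j : σ)
    (hfg : ∀ x, ∫ t in s j, f (Function.update x j t) ≤ ∫ t in s j, g (Function.update x j t)) :
    ∫ x in Set.univ.pi s, f x ≤ ∫ x in Set.univ.pi s, g x := by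
  have hofReal {h : (σ → ℝ) → ℝ} (hh : Continuous h) (hh0 : 0 ≤ h) :=
    ofReal_integral_eq_lintegral_ofReal
      (hh.continuousOn.integrableOn_compact (μ := volume) (isCompact_univ_pi hs)) (.of_forall hh0)
  have hofReal_slice {h : (σ → ℝ) → ℝ} (hh : Continuous h) (hh0 : 0 ≤ h) (x : σ → ℝ) :=
    ofReal_integral_eq_lintegral_ofReal
      ((hh.comp (continuous_const.update j continuous_id)).continuousOn.integrableOn_compact
        (μ := volume) (hs j)) (.of_forall fun t => hh0 (Function.update x j t))
  rw [← ENNReal.ofReal_le_ofReal_iff (integral_nonneg hg0), hofReal hf hf0, hofReal hg hg0,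
    volume_pi, Measure.restrict_pi_pi]
  refine lintegral_le_of_lmarginal_le {j} hf.measurable.ennreal_ofReal
    hg.measurable.ennreal_ofReal fun x => ?_
  rw [lmarginal_singleton, lmarginal_singleton]
  exact (hofReal_slice hf hf0 x).symm.trans_le <|
    (ENNReal.ofReal_le_ofReal (hfg x)).trans_eq (hofReal_slice hg hg0 x)

/-- The squared `L²` norm of a polynomial over the cube `[-1, 1]^σ`. -/
noncomputable def cubeNormSq (f : MvPolynomial σ ℝ) : ℝ :=
  ∫ x in Set.univ.pi fun _ : σ => Set.Icc (-1 : ℝ) 1, (MvPolynomial.eval x f) ^ 2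

lemma integral_sum_eval_sq {ι : Type*} (s : Finset ι) (f : ι → MvPolynomial σ ℝ) :
    ∫ x in Set.univ.pi fun _ : σ => Set.Icc (-1 : ℝ) 1,
        ∑ i ∈ s, (MvPolynomial.eval x (f i)) ^ 2 =
      ∑ i ∈ s, cubeNormSq (f i) :=
  integral_finsetSum _ fun i _ => (continuous_eval_sq (f i)).continuousOn.integrableOn_compact
    (isCompact_univ_pi fun _ => isCompact_Icc)

lemma cubeNormSq_le_of_forall_slice [DecidableEq σ] {K : ℝ} (hK : 0 ≤ K)
    {f g : MvPolynomial σ ℝ} (j : σ)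
    (h : ∀ x, intervalInner (slice x j f) (slice x j f) ≤
      K * intervalInner (slice x j g) (slice x j g)) :
    cubeNormSq f ≤ K * cubeNormSq g := by
  rw [cubeNormSq, cubeNormSq, ← integral_const_mul]
  refine setIntegral_pi_le_of_forall_update (fun _ => isCompact_Icc) (continuous_eval_sq f)
    (continuous_const.mul (continuous_eval_sq g)) (fun x => sq_nonneg _)
    (fun x => mul_nonneg hK (sq_nonneg _)) j fun x => ?_
  rw [integral_const_mul, setIntegral_eval_update_sq, setIntegral_eval_update_sq]
  exact h x

end CubeNorm

section LobattoReduction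

variable {σ : Type*} [Fintype σ] {p : ℕ} {j : σ} {q w : MvPolynomial σ ℝ}

lemma cubeNormSq_le_lobattoConst_mul (hp : 2 ≤ p) (hq : q.degreeOf j = 0)
    (hw : w.degreeOf j ≤ p - 1) :
    cubeNormSq w ≤
      lobattoConst p * cubeNormSq (w + aeval (MvPolynomial.X j) (lobattoChi p) * q) := by
  classical
  refine cubeNormSq_le_of_forall_slice (lobattoConst_nonneg hp) j fun x => ?_
  obtain ⟨c, hc⟩ := exists_slice_add_aeval_X_mul_eq x hq (lobattoChi p) w
  rw [hc]
  exact intervalInner_self_le_lobattoConst_mul hp ((natDegree_slice_le x j w).trans hw) c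

lemma cubeNormSq_pderiv_self_le (hp : 2 ≤ p) (hq : q.degreeOf j = 0)
    (hw : w.degreeOf j ≤ p - 1) :
    cubeNormSq (MvPolynomial.pderiv j w) ≤
      cubeNormSq (MvPolynomial.pderiv j
        (w + aeval (MvPolynomial.X j) (lobattoChi p) * q)) := by
  classical
  rw [← one_mul (cubeNormSq (MvPolynomial.pderiv j (_ + _)))]
  refine cubeNormSq_le_of_forall_slice zero_le_one j fun x => ?_
  obtain ⟨c, hc⟩ := exists_slice_add_aeval_X_mul_eq x hq (lobattoChi p) w
  rw [one_mul, ← derivative_slice, ← derivative_slice, hc]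
  exact intervalInner_derivative_self_le hp ((natDegree_slice_le x j w).trans hw) c

lemma cubeNormSq_pderiv_le_of_ne (hp : 2 ≤ p) (hq : q.degreeOf j = 0)
    (hw : w.degreeOf j ≤ p - 1) {i : σ} (hij : i ≠ j) :
    cubeNormSq (MvPolynomial.pderiv i w) ≤
      lobattoConst p * cubeNormSq (MvPolynomial.pderiv i
        (w + aeval (MvPolynomial.X j) (lobattoChi p) * q)) := by
  rw [map_add, MvPolynomial.pderiv_mul, Derivation.map_aeval,
    MvPolynomial.pderiv_X_of_ne hij.symm, smul_zero, zero_mul, zero_add]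
  exact cubeNormSq_le_lobattoConst_mul hp
    (Nat.le_zero.1 ((degreeOf_pderiv_le i j q).trans hq.le))
    ((degreeOf_pderiv_le i j w).trans hw)

lemma exists_lobatto_reduction (hp : 2 ≤ p) {u : MvPolynomial σ ℝ} (hu : u.degreeOf j ≤ p) :
    ∃ w : MvPolynomial σ ℝ, w.degreeOf j ≤ p - 1 ∧ (∀ i ≠ j, w.degreeOf i ≤ u.degreeOf i) ∧
      (∀ x : σ → ℝ, (lobattoChi p).eval (x j) = 0 →
        MvPolynomial.eval x w = MvPolynomial.eval x u) ∧
      cubeNormSq (MvPolynomial.pderiv j w) ≤ cubeNormSq (MvPolynomial.pderiv j u) ∧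
      ∀ i ≠ j, cubeNormSq (MvPolynomial.pderiv i w) ≤
        lobattoConst p * cubeNormSq (MvPolynomial.pderiv i u) := by
  have hχ := natDegree_lobattoChi hp
  obtain ⟨q, w, rfl, hq, hwj, hwi⟩ :=
    exists_eq_add_aeval_X_mul (χ := lobattoChi p) (by omega) j u
  have hq : q.degreeOf j = 0 := by omega
  have hwj : w.degreeOf j ≤ p - 1 := by omega
  refine ⟨w, hwj, hwi, fun x hx => ?_, cubeNormSq_pderiv_self_le hp hq hwj,
    fun i hij => cubeNormSq_pderiv_le_of_ne hp hq hwj hij⟩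
  have hgrid : MvPolynomial.eval x (aeval (MvPolynomial.X j) (lobattoChi p)) = 0 := by
    rw [← MvPolynomial.aeval_eq_eval, ← aeval_algHom_apply]
    simpa using hx
  rw [map_add, map_mul, hgrid, zero_mul, add_zero]

lemma exists_lobatto_interpolant [DecidableEq σ] (hp : 2 ≤ p) {u : MvPolynomial σ ℝ}
    (hu : ∀ i, u.degreeOf i ≤ p) (S : Finset σ) :
    ∃ w : MvPolynomial σ ℝ, (∀ i ∈ S, w.degreeOf i ≤ p - 1) ∧ (∀ i ∉ S, w.degreeOf i ≤ p) ∧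
      (∀ x : σ → ℝ, (∀ i ∈ S, (lobattoChi p).eval (x i) = 0) →
        MvPolynomial.eval x w = MvPolynomial.eval x u) ∧
      ∀ i, cubeNormSq (MvPolynomial.pderiv i w) ≤
        lobattoConst p ^ (S.erase i).card * cubeNormSq (MvPolynomial.pderiv i u) := by
  induction S using Finset.induction_on with
  | empty => exact ⟨u, by simp, fun i _ => hu i, fun _ _ => rfl, by simp⟩
  | insert j S hj ih =>
    obtain ⟨w, hwS, hwSc, hwgrid, hwnorm⟩ := ih
    obtain ⟨w', hw'j, hw'i, hw'grid, hw'self, hw'ne⟩ := exists_lobatto_reduction hp (hwSc j hj)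
    refine ⟨w', fun i hi => ?_, fun i hi => ?_, fun x hx => ?_, fun i => ?_⟩
    · rcases eq_or_ne i j with rfl | hij
      · exact hw'j
      · exact (hw'i i hij).trans (hwS i (Finset.mem_of_mem_insert_of_ne hi hij))
    · rw [Finset.mem_insert, not_or] at hi
      exact (hw'i i hi.1).trans (hwSc i hi.2)
    · rw [hw'grid x (hx j (Finset.mem_insert_self j S)),
        hwgrid x fun i hi => hx i (Finset.mem_insert_of_mem hi)]
    · rcases eq_or_ne i j with rfl | hij
      · rw [Finset.erase_insert hj]
        simpa only [Finset.erase_eq_of_notMem hj] using hw'self.trans (hwnorm i)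
      · rw [Finset.erase_insert_of_ne hij.symm, Finset.card_insert_of_notMem (by simp [hj]),
          pow_succ', mul_assoc]
        exact (hw'ne i hij).trans
          (mul_le_mul_of_nonneg_left (hwnorm i) (lobattoConst_nonneg hp))

lemma eq_of_forall_eval_eq_of_lobattoChi_eval_eq_zero {σ : Type*} [Finite σ] {p : ℕ} (hp : 2 ≤ p)
    {v w : MvPolynomial σ ℝ} (hv : ∀ i, v.degreeOf i ≤ p - 1) (hw : ∀ i, w.degreeOf i ≤ p - 1)
    (hvw : ∀ x : σ → ℝ, (∀ i, (lobattoChi p).eval (x i) = 0) →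
      MvPolynomial.eval x v = MvPolynomial.eval x w) : v = w := by
  have hcard := le_card_roots_lobattoChi hp
  refine sub_eq_zero.1 <| MvPolynomial.eq_zero_of_eval_zero_at_prod_finset (v - w)
    (fun _ => (lobattoChi p).roots.toFinset) (fun i => ?_) fun x hx => ?_
  · have := (MvPolynomial.degreeOf_sub_le i v w).trans (max_le (hv i) (hw i))
    omega
  · rw [map_sub, sub_eq_zero]
    exact hvw x fun i => (mem_roots'.1 (Multiset.mem_toFinset.1 (hx i))).2

theorem cubeNormSq_pderiv_le_of_lobatto_interp {u v : MvPolynomial σ ℝ} (hp : 2 ≤ p)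
    (hu : ∀ i, u.degreeOf i ≤ p) (hv : ∀ i, v.degreeOf i ≤ p - 1)
    (hinterp : ∀ x : σ → ℝ, (∀ i, (lobattoChi p).eval (x i) = 0) →
      MvPolynomial.eval x v = MvPolynomial.eval x u) (i : σ) :
    cubeNormSq (MvPolynomial.pderiv i v) ≤
      lobattoConst p ^ (Fintype.card σ - 1) * cubeNormSq (MvPolynomial.pderiv i u) := by
  classical
  obtain ⟨w, hw, -, hwgrid, hwnorm⟩ := exists_lobatto_interpolant hp hu Finset.univ
  have hvw : v = w := eq_of_forall_eval_eq_of_lobattoChi_eval_eq_zero hp hv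
    (fun i => hw i (Finset.mem_univ i))
    fun x hx => (hinterp x hx).trans (hwgrid x fun i _ => hx i).symm
  rw [hvw, ← Finset.card_univ, ← Finset.card_erase_of_mem (Finset.mem_univ i)]
  exact hwnorm i

end LobattoReduction

/-- H¹-seminorm stability of tensor-product Gauss–Lobatto interpolation in `d`
dimensions: if `u` is a polynomial in `d` variables of degree at most `p` in each
variable, and `v` is the polynomial of degree at most `p − 1` in each variable
agreeing with `u` at every point of the grid of Gauss–Lobatto nodes (the points all
of whose coordinates are roots of `χ_p`), then
`∫_{[−1,1]^d} |∇v|² ≤ (2 + 4/(2p−3))^{d−1} ∫_{[−1,1]^d} |∇u|²`. -/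
theorem gauss_lobatto_interp_h1_stability_multi (d p : ℕ) (hd : 1 ≤ d) (hp : 2 ≤ p)
    (u v : MvPolynomial (Fin d) ℝ)
    (hu : ∀ i, u.degreeOf i ≤ p) (hv : ∀ i, v.degreeOf i ≤ p - 1)
    (hinterp : ∀ x : Fin d → ℝ, (∀ i, (lobattoChi p).eval (x i) = 0) →
      MvPolynomial.eval x v = MvPolynomial.eval x u) :
    ∫ x in Set.univ.pi fun _ : Fin d => Set.Icc (-1 : ℝ) 1,
        ∑ i, (MvPolynomial.eval x (MvPolynomial.pderiv i v)) ^ 2 ≤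
      (2 + 4 / (2 * (p : ℝ) - 3)) ^ (d - 1) *
        ∫ x in Set.univ.pi fun _ : Fin d => Set.Icc (-1 : ℝ) 1,
          ∑ i, (MvPolynomial.eval x (MvPolynomial.pderiv i u)) ^ 2 := by
  rw [integral_sum_eval_sq, integral_sum_eval_sq, Finset.mul_sum]
  refine Finset.sum_le_sum fun i _ => ?_
  simpa only [lobattoConst, Fintype.card_fin] using
    cubeNormSq_pderiv_le_of_lobatto_interp hp hu hv hinterp i
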